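/- Let (Z, τ) be a zero-dimensional Polish space, 1 ≤ ξ < ω₁, and let 𝒜 ⊆ Σ⁰_ξ(Z, τ) be countable. Then there exists a zero-dimensional Polish topology σ on the set Z such that τ ⊆ σ ⊆ Σ⁰_ξ(Z, τ) and 𝒜 ⊆ σ. -/

import Mathlib

open Set

/-- The additive Borel classes `Σ⁰_ξ`: `Σ⁰_1` is the open sets, and for larger `ξ`
a set is in `Σ⁰_ξ` iff it is open or a countable union of complements of sets in
lower classes `Σ⁰_{ξₙ}` with `1 ≤ ξₙ < ξ`. -/
def Sigma0 (Z : Type*) [TopologicalSpace Z] (ξ : Ordinal.{0}) : Set (Set Z) :=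
  {A | IsOpen A ∨ ∃ g : ℕ → Set Z, ∃ o : ℕ → {o : Ordinal.{0} // 1 ≤ o ∧ o < ξ},
      (∀ n, g n ∈ Sigma0 Z (o n).1) ∧ A = ⋃ n, (g n)ᶜ}
termination_by ξ
decreasing_by exact (o n).2.2

/-- A topology is zero-dimensional if the space is non-empty and there is a
base consisting of clopen sets. -/
def ZeroDimensional (Z : Type*) (t : TopologicalSpace Z) : Prop :=
  Nonempty Z ∧ ∃ b : Set (Set Z), (∀ s ∈ b, @IsClopen Z t s) ∧
    @TopologicalSpace.IsTopologicalBasis Z t b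

namespace Stmt11Aux

open Set TopologicalSpace Topology

variable {Z : Type*}

lemma mem_iff (τ : TopologicalSpace Z) (ξ : Ordinal.{0}) (A : Set Z) :
    A ∈ @Sigma0 Z τ ξ ↔ IsOpen[τ] A ∨
      ∃ g : ℕ → Set Z, ∃ o : ℕ → {o : Ordinal.{0} // 1 ≤ o ∧ o < ξ},
      (∀ n, g n ∈ @Sigma0 Z τ (o n).1) ∧ A = ⋃ n, (g n)ᶜ := by
  rw [Sigma0]; rfl

lemma mono (τ : TopologicalSpace Z) {η ξ : Ordinal.{0}} (h : η ≤ ξ) :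
    @Sigma0 Z τ η ⊆ @Sigma0 Z τ ξ := by
  intro A hA
  rw [mem_iff] at hA ⊢
  rcases hA with hA | ⟨g, o, hg, rfl⟩
  · exact Or.inl hA
  · exact Or.inr ⟨g, fun n => ⟨(o n).1, (o n).2.1, (o n).2.2.trans_le h⟩, hg, rfl⟩

lemma compl_mem (τ : TopologicalSpace Z) {η ξ : Ordinal.{0}} (h1 : 1 ≤ η) (h : η < ξ)
    {A : Set Z} (hA : A ∈ @Sigma0 Z τ η) : Aᶜ ∈ @Sigma0 Z τ ξ := by
  rw [mem_iff]
  exact Or.inr ⟨fun _ => A, fun _ => ⟨η, h1, h⟩, fun _ => hA, by simp [iUnion_const]⟩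

lemma open_mem (τ : TopologicalSpace Z) (ξ : Ordinal.{0})
    {A : Set Z} (hA : IsOpen[τ] A) : A ∈ @Sigma0 Z τ ξ := by
  rw [mem_iff]; exact Or.inl hA

lemma exists_repr (τ : TopologicalSpace Z) (hP : @PolishSpace Z τ) {ξ : Ordinal.{0}} (h : 1 < ξ)
    {A : Set Z} (hA : A ∈ @Sigma0 Z τ ξ) :
      ∃ g : ℕ → Set Z, ∃ o : ℕ → {o : Ordinal.{0} // 1 ≤ o ∧ o < ξ},
      (∀ n, g n ∈ @Sigma0 Z τ (o n).1) ∧ A = ⋃ n, (g n)ᶜ := by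
  rw [mem_iff] at hA
  rcases hA with hA | hA
  · letI := upgradeIsCompletelyMetrizable Z
    obtain ⟨F, hF, -, hU, -⟩ := IsOpen.exists_iUnion_isClosed hA
    exact ⟨fun n => (F n)ᶜ, fun _ => ⟨1, le_rfl, h⟩,
      fun n => open_mem _ _ (hF n).isOpen_compl, by simp [hU]⟩
  · exact hA

lemma eq_open (τ : TopologicalSpace Z) {ξ : Ordinal.{0}} (h : ¬ 1 < ξ)
    {A : Set Z} (hA : A ∈ @Sigma0 Z τ ξ) : IsOpen[τ] A := by
  rw [mem_iff] at hA
  rcases hA with hA | ⟨g, o, -⟩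
  · exact hA
  · exact absurd ((o 0).2.1.trans_lt (o 0).2.2) h

lemma iUnion_mem (τ : TopologicalSpace Z) (hP : @PolishSpace Z τ) (ξ : Ordinal.{0})
    (A : ℕ → Set Z) (hA : ∀ n, A n ∈ @Sigma0 Z τ ξ) : (⋃ n, A n) ∈ @Sigma0 Z τ ξ := by
  by_cases h : 1 < ξ
  · choose g o hg hu using fun n => exists_repr τ hP h (hA n)
    rw [mem_iff]
    refine Or.inr ⟨fun k => g k.unpair.1 k.unpair.2, fun k => o k.unpair.1 k.unpair.2,
      fun k => hg _ _, ?_⟩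
    rw [iUnion_unpair (fun i j => (g i j)ᶜ)]
    exact iUnion_congr hu
  · exact open_mem _ _ (isOpen_iUnion fun n => eq_open τ h (hA n))

lemma sUnion_mem (τ : TopologicalSpace Z) (hP : @PolishSpace Z τ) (ξ : Ordinal.{0})
    (S : Set (Set Z)) (hS : S.Countable) (hA : ∀ s ∈ S, s ∈ @Sigma0 Z τ ξ) :
    (⋃₀ S) ∈ @Sigma0 Z τ ξ := by
  rcases S.eq_empty_or_nonempty with rfl | hne
  · rw [sUnion_empty]; exact open_mem _ _ isOpen_empty
  · obtain ⟨f, rfl⟩ := hS.exists_eq_range hne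
    rw [sUnion_range]
    exact iUnion_mem τ hP ξ f fun n => hA _ (mem_range_self n)

lemma union_mem (τ : TopologicalSpace Z) (hP : @PolishSpace Z τ) (ξ : Ordinal.{0})
    {A B : Set Z} (hA : A ∈ @Sigma0 Z τ ξ) (hB : B ∈ @Sigma0 Z τ ξ) :
    A ∪ B ∈ @Sigma0 Z τ ξ := by
  rw [← sUnion_pair]
  apply sUnion_mem τ hP ξ _ (by simp)
  rintro s (rfl | rfl) <;> assumption

lemma inter_mem (τ : TopologicalSpace Z) (hP : @PolishSpace Z τ) (ξ : Ordinal.{0})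
    {A B : Set Z} (hA : A ∈ @Sigma0 Z τ ξ) (hB : B ∈ @Sigma0 Z τ ξ) :
    A ∩ B ∈ @Sigma0 Z τ ξ := by
  by_cases h : 1 < ξ
  · obtain ⟨g, o, hg, rfl⟩ := exists_repr τ hP h hA
    obtain ⟨g', o', hg', rfl⟩ := exists_repr τ hP h hB
    rw [iUnion_inter_iUnion]
    have : (⋃ i, ⋃ j, (g i)ᶜ ∩ (g' j)ᶜ) ∈ @Sigma0 Z τ ξ := by
      refine iUnion_mem τ hP ξ _ fun i => iUnion_mem τ hP ξ _ fun j => ?_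
      rw [← compl_union]
      refine compl_mem τ (η := max (o i).1 (o' j).1) (le_max_of_le_left (o i).2.1)
        (max_lt (o i).2.2 (o' j).2.2) ?_
      exact union_mem τ hP _ (mono τ (le_max_left _ _) (hg i)) (mono τ (le_max_right _ _) (hg' j))
    simpa [iUnion_prod'] using this
  · exact open_mem _ _ ((eq_open τ h hA).inter (eq_open τ h hB))

/-- The properties required of the finer topology. -/
def Good (τ : TopologicalSpace Z) (ξ : Ordinal.{0}) (σ : TopologicalSpace Z) : Prop :=
  @PolishSpace Z σ ∧ ZeroDimensional Z σ ∧ σ ≤ τ ∧ ∀ U : Set Z, IsOpen[σ] U → U ∈ @Sigma0 Z τ ξ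

lemma good_iInf (τ : TopologicalSpace Z) (hP : @PolishSpace Z τ) (hzd : ZeroDimensional Z τ)
    (ξ : Ordinal.{0}) {ι : Type*} [Countable ι] (m : ι → TopologicalSpace Z)
    (hm : ∀ i, Good τ ξ (m i)) : ∃ σ, Good τ ξ σ ∧ ∀ i, σ ≤ m i := by
  let t : Option ι → TopologicalSpace Z := fun i => i.elim τ m
  have ht : ∀ i, Good τ ξ (t i) := by
    rintro (_ | i)
    · exact ⟨hP, hzd, le_rfl, fun U hU => open_mem _ _ hU⟩
    · exact hm i
  have hpol : @PolishSpace Z (⨅ i, t i) := .iInf ⟨none, fun i => (ht i).2.2.1⟩ fun i => (ht i).1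
  choose hne b hb hbasis using fun i => (ht i).2.1
  have hgen : (⨅ i, t i) = generateFrom (⋃ i, b i) := by
    rw [generateFrom_iUnion]
    exact iInf_congr fun i => @IsTopologicalBasis.eq_generateFrom Z (t i) _ (hbasis i)
  have hB := @isTopologicalBasis_of_subbasis Z (⨅ i, t i) _ hgen
  refine ⟨⨅ i, t i, ⟨hpol, ⟨hne none, _, ?_, hB⟩, iInf_le t none, ?_⟩, fun i => iInf_le t (some i)⟩
  · rintro _ ⟨f, ⟨hf, hfb⟩, rfl⟩
    have : ∀ s ∈ f, @IsClopen Z (⨅ i, t i) s := by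
      intro s hs
      obtain ⟨i, hi⟩ := mem_iUnion.1 (hfb hs)
      exact ⟨(hb i s hi).1.mono (iInf_le t i), (hb i s hi).2.mono (iInf_le t i)⟩
    exact ⟨@isClosed_sInter Z (⨅ i, t i) _ fun s hs => (this s hs).1,
      @Set.Finite.isOpen_sInter Z (⨅ i, t i) _ hf fun s hs => (this s hs).2⟩
  · intro U hU
    obtain ⟨S, hS, rfl⟩ := @IsTopologicalBasis.open_eq_sUnion Z (⨅ i, t i) _ hB _ hU
    have hSo : ∀ s ∈ S, IsOpen[⨅ i, t i] s := fun s hs =>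
      @IsTopologicalBasis.isOpen Z (⨅ i, t i) _ _ hB (hS hs)
    obtain ⟨T, hTc, hTS, hT⟩ := @isOpen_sUnion_countable Z (⨅ i, t i) hpol.1 S hSo
    rw [← hT]
    refine sUnion_mem τ hP ξ T hTc fun s hs => ?_
    obtain ⟨f, ⟨hf, hfb⟩, rfl⟩ := hS (hTS hs)
    clear hs
    beta_reduce
    induction f, hf using Set.Finite.induction_on with
    | empty => rw [sInter_empty]; exact open_mem _ _ isOpen_univ
    | @insert a s _ _ ih =>
      rw [sInter_insert]
      refine inter_mem τ hP ξ ?_ (ih ((subset_insert _ _).trans hfb))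
      obtain ⟨i, hi⟩ := mem_iUnion.1 (hfb (mem_insert _ _))
      exact (ht i).2.2.2 _ (hb i _ hi).2

/-- Making a closed set clopen. -/
lemma clopen_step (σ : TopologicalSpace Z) (hP : @PolishSpace Z σ) (hzd : ZeroDimensional Z σ)
    (s : Set Z) (hs : IsClosed[σ] s) :
    ∃ σ' : TopologicalSpace Z, @PolishSpace Z σ' ∧ ZeroDimensional Z σ' ∧ σ' ≤ σ ∧
      IsOpen[σ'] s ∧
      ∀ U, IsOpen[σ'] U → ∃ V W, IsOpen[σ] V ∧ IsOpen[σ] W ∧ U = (V ∩ s) ∪ (W ∩ sᶜ) := by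
  classical
  have : PolishSpace s := hs.polishSpace
  let t : Set Z := sᶜ
  have : PolishSpace t := hs.isOpen_compl.polishSpace
  let f : s ⊕ t ≃ Z := Equiv.Set.sumCompl s
  have hle : TopologicalSpace.coinduced f instTopologicalSpaceSum ≤ σ := by
    simp only [instTopologicalSpaceSum, coinduced_sup, coinduced_compose, sup_le_iff,
      ← continuous_iff_coinduced_le]
    exact ⟨continuous_subtype_val, continuous_subtype_val⟩
  have hso : IsOpen[.coinduced f instTopologicalSpaceSum] s := by
    rw [isOpen_coinduced, isOpen_sum_iff]
    simp [preimage_preimage, f, t]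
  have hop : ∀ U, IsOpen[.coinduced f instTopologicalSpaceSum] U →
      ∃ V W, IsOpen[σ] V ∧ IsOpen[σ] W ∧ U = (V ∩ s) ∪ (W ∩ sᶜ) := by
    intro U hU
    rw [isOpen_coinduced, isOpen_sum_iff] at hU
    obtain ⟨⟨V, hV, hV'⟩, ⟨W, hW, hW'⟩⟩ := hU
    refine ⟨V, W, hV, hW, ?_⟩
    ext x
    by_cases hx : x ∈ s
    · have := Set.ext_iff.1 hV' ⟨x, hx⟩
      simp only [mem_preimage] at this
      simp only [mem_union, mem_inter_iff, hx, this, mem_compl_iff, not_true, not_false_eq_true,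
        and_true, and_false, or_false, false_or]
      rfl
    · have := Set.ext_iff.1 hW' ⟨x, hx⟩
      simp only [mem_preimage] at this
      simp only [mem_union, mem_inter_iff, hx, this, mem_compl_iff, not_true, not_false_eq_true,
        and_true, and_false, or_false, false_or]
      rfl
  refine ⟨.coinduced f instTopologicalSpaceSum, ?_, ?_, hle, hso, hop⟩
  · rw [← f.induced_symm]
    exact f.symm.polishSpace_induced
  · obtain ⟨hne, b, hb, hB⟩ := hzd
    generalize TopologicalSpace.coinduced f instTopologicalSpaceSum = σ' at *
    have hsc : @IsClopen Z σ' s := ⟨hs.mono hle, hso⟩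
    refine ⟨hne, {C | @IsClopen Z σ' C}, fun _ h => h, ?_⟩
    refine @isTopologicalBasis_of_isOpen_of_nhds Z σ' _ (fun u hu => hu.2) ?_
    intro x U hx hU
    obtain ⟨V, W, hV, hW, rfl⟩ := hop U hU
    have key : ∀ V : Set Z, IsOpen[σ] V → x ∈ V → ∃ C, @IsClopen Z σ' C ∧ x ∈ C ∧ C ⊆ V := by
      intro V hV hxV
      obtain ⟨C, hC, hxC, hCV⟩ := @IsTopologicalBasis.exists_subset_of_mem_open Z σ _ hB _ _ hxV hV
      exact ⟨C, ⟨(hb C hC).1.mono hle, (hb C hC).2.mono hle⟩, hxC, hCV⟩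
    rcases hx with ⟨h1, h2⟩ | ⟨h1, h2⟩
    · obtain ⟨C, hC, hxC, hCV⟩ := key V hV h1
      exact ⟨C ∩ s, @IsClopen.inter Z σ' _ _ hC hsc, ⟨hxC, h2⟩,
        fun y hy => Or.inl ⟨hCV hy.1, hy.2⟩⟩
    · obtain ⟨C, hC, hxC, hCV⟩ := key W hW h1
      exact ⟨C ∩ sᶜ, @IsClopen.inter Z σ' _ _ hC (@IsClopen.compl Z σ' _ hsc), ⟨hxC, h2⟩,
        fun y hy => Or.inr ⟨hCV hy.1, hy.2⟩⟩

lemma single (τ : TopologicalSpace Z) (hP : @PolishSpace Z τ) (hzd : ZeroDimensional Z τ)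
    (ξ : Ordinal.{0}) : ∀ A ∈ @Sigma0 Z τ ξ, ∃ σ, Good τ ξ σ ∧ IsOpen[σ] A := by
  induction ξ using WellFoundedLT.induction with
  | ind ξ ih =>
  intro A hA
  rw [mem_iff] at hA
  rcases hA with hA | ⟨g, o, hg, rfl⟩
  · exact ⟨τ, ⟨hP, hzd, le_rfl, fun U hU => open_mem _ _ hU⟩, hA⟩
  · have : ∀ n, ∃ σ, Good τ ξ σ ∧ IsOpen[σ] (g n)ᶜ := by
      intro n
      obtain ⟨σ, ⟨h1, h2, h3, h4⟩, h5⟩ := ih (o n).1 (o n).2.2 (g n) (hg n)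
      obtain ⟨σ', k1, k2, k3, k4, k5⟩ := clopen_step σ h1 h2 (g n)ᶜ
        (by rw [← @isOpen_compl_iff Z _ σ, compl_compl]; exact h5)
      refine ⟨σ', ⟨k1, k2, k3.trans h3, fun U hU => ?_⟩, k4⟩
      obtain ⟨V, W, hV, hW, rfl⟩ := k5 U hU
      have hle := (o n).2.2.le
      refine union_mem τ hP ξ (inter_mem τ hP ξ (mono τ hle (h4 V hV))
        (compl_mem τ (o n).2.1 (o n).2.2 (hg n))) (inter_mem τ hP ξ (mono τ hle (h4 W hW)) ?_)
      rw [compl_compl]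
      exact mono τ hle (hg n)
    choose m hm hmo using this
    obtain ⟨σ, hσ, hle⟩ := good_iInf τ hP hzd ξ m hm
    exact ⟨σ, hσ, @isOpen_iUnion Z _ σ _ fun n => (hmo n).mono (hle n)⟩

end Stmt11Aux

/-- Kuratowski's transfer theorem. Let `(Z, τ)` be a
zero-dimensional Polish space, `1 ≤ ξ < ω₁`, and `𝒜 ⊆ Σ⁰_ξ(Z, τ)` countable.
Then there is a zero-dimensional Polish topology `σ` on `Z` with
`τ ⊆ σ ⊆ Σ⁰_ξ(Z, τ)` and `𝒜 ⊆ σ`. -/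
theorem stmt11 {Z : Type*} (τ : TopologicalSpace Z) (hPolish : @PolishSpace Z τ)
    (hzd : ZeroDimensional Z τ) (ξ : Ordinal.{0}) (hξ1 : 1 ≤ ξ)
    (hξc : ξ.card ≤ Cardinal.aleph0) (𝒜 : Set (Set Z)) (h𝒜c : 𝒜.Countable)
    (h𝒜 : 𝒜 ⊆ @Sigma0 Z τ ξ) :
    ∃ σ : TopologicalSpace Z, @PolishSpace Z σ ∧ ZeroDimensional Z σ ∧
      (∀ U : Set Z, @IsOpen Z τ U → @IsOpen Z σ U) ∧
      (∀ U : Set Z, @IsOpen Z σ U → U ∈ @Sigma0 Z τ ξ) ∧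
      (∀ A ∈ 𝒜, @IsOpen Z σ A) := by
  choose! m hm hmo using Stmt11Aux.single τ hPolish hzd ξ
  have := h𝒜c.to_subtype
  obtain ⟨σ, ⟨h1, h2, h3, h4⟩, hle⟩ := Stmt11Aux.good_iInf τ hPolish hzd ξ
    (fun A : 𝒜 => m A) (fun A => hm A (h𝒜 A.2))
  exact ⟨σ, h1, h2, fun U hU => hU.mono h3, h4, fun A hA => (hmo A (h𝒜 hA)).mono (hle ⟨A, hA⟩)⟩
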